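/- For all integers 1 < m ≤ k and every integer r with 1 ≤ r < m, the element h_{k,m} of Houghton's group H₂ has positive spherical comparison curvature at radius r: κ_r^𝒮(h_{k,m}) > 0 with respect to the generating set {s, s⁻¹, σ}. -/

import Mathlib

namespace MedScale

/-- Word length of `g` with respect to a generating set `S`: the least length of a
word in the elements of `S` representing `g`. -/
noncomputable def wlen {G : Type*} [Group G] (S : Set G) (g : G) : ℕ :=
  sInf {n : ℕ | ∃ l : List G, (∀ x ∈ l, x ∈ S) ∧ l.prod = g ∧ l.length = n}

/-- Sphere of radius `r` about the identity. -/
def sphere {G : Type*} [Group G] (S : Set G) (r : ℕ) : Set G := {g : G | wlen S g = r}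

/-- Ball of radius `r` about the identity. -/
def ball {G : Type*} [Group G] (S : Set G) (r : ℕ) : Set G := {g : G | wlen S g ≤ r}

/-- Spherical comparison distance `𝒮_r(g) = (1/|S_r|) ∑_{w ∈ S_r} |w⁻¹ g w|`. -/
noncomputable def sphereDist {G : Type*} [Group G] (S : Set G) (r : ℕ) (g : G) : ℝ :=
  (1 / (Nat.card (sphere S r) : ℝ)) * ∑ᶠ w ∈ sphere S r, (wlen S (w⁻¹ * g * w) : ℝ)

/-- Spherical comparison curvature `κ_r^𝒮(g) = (|g| − 𝒮_r(g))/|g|`. -/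
noncomputable def sphereCurv {G : Type*} [Group G] (S : Set G) (r : ℕ) (g : G) : ℝ :=
  ((wlen S g : ℝ) - sphereDist S r g) / (wlen S g : ℝ)

/-- Ball comparison distance `ℬ_r(g) = (1/|B_r|) ∑_{w ∈ B_r} |w⁻¹ g w|`. -/
noncomputable def ballDist {G : Type*} [Group G] (S : Set G) (r : ℕ) (g : G) : ℝ :=
  (1 / (Nat.card (ball S r) : ℝ)) * ∑ᶠ w ∈ ball S r, (wlen S (w⁻¹ * g * w) : ℝ)

/-- Ball comparison curvature `κ_r^ℬ(g) = (|g| − ℬ_r(g))/|g|`. -/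
noncomputable def ballCurv {G : Type*} [Group G] (S : Set G) (r : ℕ) (g : G) : ℝ :=
  ((wlen S g : ℝ) - ballDist S r g) / (wlen S g : ℝ)

/-- `GenCon(g) = (1/|S|) ∑_{s ∈ S} |s⁻¹ g s|`. -/
noncomputable def genCon {G : Type*} [Group G] (S : Set G) (g : G) : ℝ :=
  (1 / (Nat.card S : ℝ)) * ∑ᶠ s ∈ S, (wlen S (s⁻¹ * g * s) : ℝ)

/-- Comparison curvature `κ(g) = (|g| − GenCon(g))/|g|`. -/
noncomputable def curv {G : Type*} [Group G] (S : Set G) (g : G) : ℝ :=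
  ((wlen S g : ℝ) - genCon S g) / (wlen S g : ℝ)

end MedScale

namespace Houghton

/-- The generator `s` of Houghton's group `H₂`: shift every bead one position to the
right along the bi-infinite string `ℤ ∖ {0}` (extended to fix `0`), i.e.
`s n = n + 1` for `n ≥ 1`, `s (-1) = 1`, and `s n = n + 1` for `n ≤ -2`. -/
def s : Equiv.Perm ℤ where
  toFun n := if n = 0 then 0 else if n = -1 then 1 else n + 1
  invFun n := if n = 0 then 0 else if n = 1 then -1 else n - 1
  left_inv := by
    intro n
    beta_reduce
    split_ifs <;> first | omega | exact (‹False›).elim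
  right_inv := by
    intro n
    beta_reduce
    split_ifs <;> first | omega | exact (‹False›).elim

/-- The generator `σ` of Houghton's group `H₂`: the transposition exchanging `-1` and `1`. -/
def σ : Equiv.Perm ℤ := Equiv.swap (-1) 1

/-- The standard symmetric generating set `{s, s⁻¹, σ}` of Houghton's group `H₂`. -/
def S : Set (Equiv.Perm ℤ) := {s, s⁻¹, σ}

/-- Houghton's group `H₂`, as the group generated by `s` and `σ` (equivalently, the
permutations of `ℤ ∖ {0}` that agree with a translation outside a finite set). -/
def H₂ : Subgroup (Equiv.Perm ℤ) := Subgroup.closure {s, σ}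

/-- The element `h_{k,m}` exchanging `l` and `-l` for every `m ≤ l ≤ k`
and fixing all other points. -/
def h (k m : ℕ) : Equiv.Perm ℤ where
  toFun n := if m ≤ n.natAbs ∧ n.natAbs ≤ k then -n else n
  invFun n := if m ≤ n.natAbs ∧ n.natAbs ≤ k then -n else n
  left_inv := by
    intro n; dsimp only
    by_cases hc : m ≤ n.natAbs ∧ n.natAbs ≤ k
    · rw [if_pos hc, if_pos (by simpa [Int.natAbs_neg] using hc), neg_neg]
    · rw [if_neg hc, if_neg hc]
  right_inv := by
    intro n; dsimp only
    by_cases hc : m ≤ n.natAbs ∧ n.natAbs ≤ k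
    · rw [if_pos hc, if_pos (by simpa [Int.natAbs_neg] using hc), neg_neg]
    · rw [if_neg hc, if_neg hc]

end Houghton

namespace Houghton

/-! ### Words -/

def HasWord (g : Equiv.Perm ℤ) (n : ℕ) : Prop :=
  ∃ l : List (Equiv.Perm ℤ), (∀ x ∈ l, x ∈ S) ∧ l.prod = g ∧ l.length = n

lemma HasWord.wlen_le {g : Equiv.Perm ℤ} {n : ℕ} (hg : HasWord g n) : MedScale.wlen S g ≤ n :=
  Nat.sInf_le hg

lemma HasWord.wlen {g : Equiv.Perm ℤ} {n : ℕ} (hg : HasWord g n) :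
    HasWord g (MedScale.wlen S g) :=
  Nat.sInf_mem (s := {n : ℕ | ∃ l : List (Equiv.Perm ℤ), (∀ x ∈ l, x ∈ S) ∧ l.prod = g ∧ l.length = n}) ⟨n, hg⟩

lemma HasWord.mul {g g' : Equiv.Perm ℤ} {n n' : ℕ} (hg : HasWord g n) (hg' : HasWord g' n') :
    HasWord (g * g') (n + n') := by
  obtain ⟨l, h1, h2, h3⟩ := hg
  obtain ⟨l', h1', h2', h3'⟩ := hg'
  refine ⟨l ++ l', ?_, by simp [h2, h2'], by simp [h3, h3']⟩
  intro x hx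
  rcases List.mem_append.1 hx with hx | hx
  · exact h1 x hx
  · exact h1' x hx

lemma hasWord_gen {g : Equiv.Perm ℤ} (hg : g ∈ S) : HasWord g 1 :=
  ⟨[g], by simpa using hg, by simp, by simp⟩

lemma s_mem : s ∈ S := by simp [S]
lemma sinv_mem : s⁻¹ ∈ S := by simp [S]
lemma σ_mem : σ ∈ S := by simp [S]

lemma hasWord_spow (n : ℕ) : HasWord (s ^ n) n :=
  ⟨List.replicate n s, by
    intro x hx; rw [List.eq_of_mem_replicate hx]; exact s_mem, by simp, by simp⟩

lemma hasWord_sinvpow (n : ℕ) : HasWord (s⁻¹ ^ n) n :=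
  ⟨List.replicate n s⁻¹, by
    intro x hx; rw [List.eq_of_mem_replicate hx]; exact sinv_mem, by simp, by simp⟩

/-! ### Values of the generators -/

lemma s_apply (n : ℤ) : s n = if n = 0 then 0 else if n = -1 then 1 else n + 1 := rfl
lemma sinv_apply (n : ℤ) : s⁻¹ n = if n = 0 then 0 else if n = 1 then -1 else n - 1 := rfl
lemma σ_apply (n : ℤ) : σ n = if n = -1 then 1 else if n = 1 then -1 else n := by
  simp [σ, Equiv.swap_apply_def]
lemma σ_inv : σ⁻¹ = σ := by simp [σ]
lemma h_apply (k m : ℕ) (n : ℤ) :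
    h k m n = if m ≤ n.natAbs ∧ n.natAbs ≤ k then -n else n := rfl
lemma h_inv (k m : ℕ) : (h k m)⁻¹ = h k m := rfl

/-! ### Upper bound -/

lemma hasWord_swap (j : ℕ) : HasWord (Equiv.swap (-1) ((j : ℤ) + 1)) (4 * j + 1) := by
  induction j with
  | zero => simpa [σ] using hasWord_gen σ_mem
  | succ j ih =>
    have key : (Equiv.swap (-1) (((j + 1 : ℕ) : ℤ) + 1) : Equiv.Perm ℤ)
        = σ * s * Equiv.swap (-1) ((j : ℤ) + 1) * s⁻¹ * σ := by
      have e1 : s * Equiv.swap (-1) ((j : ℤ) + 1) * s⁻¹ = Equiv.swap 1 ((j : ℤ) + 2) := by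
        rw [Equiv.mul_swap_eq_swap_mul, mul_inv_cancel_right]
        congr 1
      have e2 : σ * Equiv.swap 1 ((j : ℤ) + 2) * σ⁻¹ = Equiv.swap (-1) ((j : ℤ) + 2) := by
        rw [Equiv.mul_swap_eq_swap_mul, mul_inv_cancel_right]
        congr 1
      rw [σ_inv] at e2
      calc _ = Equiv.swap (-1) ((j : ℤ) + 2) := by congr 1
        _ = σ * Equiv.swap 1 ((j : ℤ) + 2) * σ := e2.symm
        _ = _ := by rw [← e1]; group
    rw [key]
    have := (((hasWord_gen σ_mem).mul (hasWord_gen s_mem)).mul ih).mul (hasWord_gen sinv_mem)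
      |>.mul (hasWord_gen σ_mem)
    convert this using 1
    ring

lemma spow_pos (n : ℕ) (a : ℤ) (ha : 1 ≤ a) : (s ^ n) a = a + n := by
  induction n with
  | zero => simp
  | succ n ih =>
    rw [pow_succ', Equiv.Perm.mul_apply, ih, s_apply]
    push_cast; split_ifs <;> omega

lemma spow_neg (n : ℕ) (a : ℤ) (ha : a + n ≤ -1) : (s ^ n) a = a + n := by
  induction n with
  | zero => simp
  | succ n ih =>
    push_cast at ha
    rw [pow_succ', Equiv.Perm.mul_apply, ih (by omega), s_apply]
    push_cast; split_ifs <;> omega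

/-- Loop at the left end: conjugate of the transposition `(-(l+1), l+1)`. -/
lemma hasWord_loop (l : ℕ) :
    HasWord (s ^ l * Equiv.swap (-((l : ℤ) + 1)) ((l : ℤ) + 1) * (s ^ l)⁻¹) (8 * l + 1) := by
  rw [Equiv.mul_swap_eq_swap_mul, mul_inv_cancel_right, spow_pos l ((l : ℤ) + 1) (by omega),
    spow_neg l (-((l : ℤ) + 1)) (by omega)]
  convert hasWord_swap (2 * l) using 2
  · ring
  · push_cast; ring
  · ring

lemma h_self (m : ℕ) : h (m + 1) (m + 1) = Equiv.swap (-((m : ℤ) + 1)) ((m : ℤ) + 1) := by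
  ext n
  rw [h_apply, Equiv.swap_apply_def]
  split_ifs <;> omega

lemma h_succ (k m : ℕ) (hmk : m ≤ k + 1) :
    h (k + 1) m = Equiv.swap (-((k : ℤ) + 1)) ((k : ℤ) + 1) * h k m := by
  ext n
  rw [Equiv.Perm.mul_apply, h_apply, h_apply, Equiv.swap_apply_def]
  split_ifs <;> omega

/-- The spiral word. -/
lemma hasWord_spiral (m d : ℕ) :
    HasWord (s ^ (m + d) * h (m + d + 1) (m + 1) * (s ^ m)⁻¹)
      (∑ i ∈ Finset.range (d + 1), (8 * (m + i) + 1) + d) := by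
  induction d with
  | zero => simpa [h_self] using hasWord_loop m
  | succ d ih =>
    have key : s ^ (m + (d + 1)) * h (m + (d + 1) + 1) (m + 1) * (s ^ m)⁻¹
        = (s ^ (m + d + 1) * Equiv.swap (-(((m + d + 1 : ℕ) : ℤ) + 1)) (((m + d + 1 : ℕ) : ℤ) + 1)
            * (s ^ (m + d + 1))⁻¹) * s * (s ^ (m + d) * h (m + d + 1) (m + 1) * (s ^ m)⁻¹) := by
      rw [show m + (d + 1) + 1 = (m + d + 1) + 1 by ring, h_succ (m + d + 1) (m + 1) (by omega),
        show m + (d + 1) = m + d + 1 by ring, pow_succ' s (m + d)]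
      group
    rw [key]
    convert ((hasWord_loop (m + d + 1)).mul (hasWord_gen s_mem)).mul ih using 1
    rw [Finset.sum_range_succ _ (d + 1)]
    ring

/-- base length. -/
def base (m d : ℕ) : ℕ := ∑ i ∈ Finset.range (d + 1), (8 * (m + i) + 1)

lemma hasWord_conj (m d a : ℕ) (ha : a ≤ m) :
    HasWord (s ^ a * h (m + d + 1) (m + 1) * (s ^ a)⁻¹) (base m d + 2 * (m + d - a)) := by
  obtain ⟨b, rfl⟩ := Nat.exists_eq_add_of_le ha
  have key : s ^ a * h (a + b + d + 1) (a + b + 1) * (s ^ a)⁻¹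
      = s⁻¹ ^ (b + d) * (s ^ (a + b + d) * h (a + b + d + 1) (a + b + 1) * (s ^ (a + b))⁻¹)
        * s ^ b := by
    rw [show a + b + d = (b + d) + a by ring, pow_add s (b + d) a, pow_add s a b, inv_pow]
    group
  rw [key]
  convert ((hasWord_sinvpow (b + d)).mul (hasWord_spiral (a + b) d)).mul (hasWord_spow b) using 1
  simp only [base]
  omega

lemma HasWord.flip {g : Equiv.Perm ℤ} {n : ℕ} (hg : HasWord g n) :
    HasWord (Equiv.neg ℤ * g * Equiv.neg ℤ) n := by
  obtain ⟨l, h1, rfl, rfl⟩ := hg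
  have hnn : (Equiv.neg ℤ : Equiv.Perm ℤ) * Equiv.neg ℤ = 1 := by ext x; simp
  have hs : Equiv.neg ℤ * s * Equiv.neg ℤ = s⁻¹ := by
    ext x; simp only [Equiv.Perm.mul_apply, Equiv.neg_apply, s_apply, sinv_apply]
    split_ifs <;> omega
  have hs' : Equiv.neg ℤ * s⁻¹ * Equiv.neg ℤ = s := by
    ext x; simp only [Equiv.Perm.mul_apply, Equiv.neg_apply, s_apply, sinv_apply]
    split_ifs <;> omega
  have hσ : Equiv.neg ℤ * σ * Equiv.neg ℤ = σ := by
    ext x; simp only [Equiv.Perm.mul_apply, Equiv.neg_apply, σ_apply]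
    split_ifs <;> omega
  induction l with
  | nil => exact ⟨[], by simp, by simp [hnn], rfl⟩
  | cons x l ih =>
    have hx : Equiv.neg ℤ * x * Equiv.neg ℤ ∈ S := by
      have := h1 x (by simp)
      simp only [S, Set.mem_insert_iff, Set.mem_singleton_iff] at this
      rcases this with rfl | rfl | rfl
      · rw [hs]; exact sinv_mem
      · rw [hs']; exact s_mem
      · rw [hσ]; exact σ_mem
    have := (hasWord_gen hx).mul (ih (fun y hy => h1 y (by simp [hy])))
    have e : Equiv.neg ℤ * (x :: l).prod * Equiv.neg ℤ
        = Equiv.neg ℤ * x * Equiv.neg ℤ * (Equiv.neg ℤ * l.prod * Equiv.neg ℤ) := by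
      calc _ = Equiv.neg ℤ * x * 1 * l.prod * Equiv.neg ℤ := by simp [mul_assoc]
        _ = _ := by rw [← hnn]; simp only [mul_assoc]
    rw [e]
    convert this using 1
    simp [add_comm]

lemma hasWord_conj_neg (m d a : ℕ) (ha : a ≤ m) :
    HasWord ((s ^ a)⁻¹ * h (m + d + 1) (m + 1) * s ^ a) (base m d + 2 * (m + d - a)) := by
  have := (hasWord_conj m d a ha).flip
  convert this using 1
  have hnn : (Equiv.neg ℤ : Equiv.Perm ℤ) * Equiv.neg ℤ = 1 := by ext x; simp
  have hn : (Equiv.neg ℤ : Equiv.Perm ℤ)⁻¹ = Equiv.neg ℤ := rfl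
  have hs : Equiv.neg ℤ * s * (Equiv.neg ℤ)⁻¹ = s⁻¹ := by
    ext x; simp only [hn, Equiv.Perm.mul_apply, Equiv.neg_apply, s_apply, sinv_apply]
    split_ifs <;> omega
  have hh : Equiv.neg ℤ * h (m + d + 1) (m + 1) * (Equiv.neg ℤ)⁻¹ = h (m + d + 1) (m + 1) := by
    ext x; simp only [hn, Equiv.Perm.mul_apply, Equiv.neg_apply, h_apply]
    split_ifs <;> omega
  have hp : Equiv.neg ℤ * s ^ a * (Equiv.neg ℤ)⁻¹ = (s ^ a)⁻¹ := by
    rw [← conj_pow, hs, inv_pow]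
  have hp' : Equiv.neg ℤ * (s ^ a)⁻¹ * (Equiv.neg ℤ)⁻¹ = s ^ a := by
    rw [← conj_inv, hp, inv_inv]
  calc _ = (Equiv.neg ℤ * s ^ a * (Equiv.neg ℤ)⁻¹) *
        (Equiv.neg ℤ * h (m + d + 1) (m + 1) * (Equiv.neg ℤ)⁻¹) *
        (Equiv.neg ℤ * (s ^ a)⁻¹ * (Equiv.neg ℤ)⁻¹) := by rw [hp, hh, hp']
    _ = Equiv.neg ℤ * (s ^ a * h (m + d + 1) (m + 1) * (s ^ a)⁻¹) * (Equiv.neg ℤ)⁻¹ := by group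
    _ = _ := by rw [hn]

lemma hasWord_zconj (m d : ℕ) (t : ℤ) (ht : t.natAbs ≤ m) :
    HasWord ((s ^ t)⁻¹ * h (m + d + 1) (m + 1) * s ^ t) (base m d + 2 * (m + d - t.natAbs)) := by
  rcases Int.natAbs_eq t with e | e
  · have := hasWord_conj_neg m d t.natAbs ht
    rw [e, zpow_natCast, Int.natAbs_natCast]; exact this
  · have := hasWord_conj m d t.natAbs ht
    rw [e, zpow_neg, zpow_natCast, inv_inv, Int.natAbs_neg, Int.natAbs_natCast]; exact this

/-! ### Conjugates by short words -/

lemma natAbs_gen (x : Equiv.Perm ℤ) (hx : x ∈ S) (n : ℤ) : (x n).natAbs ≤ n.natAbs + 1 := by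
  simp only [S, Set.mem_insert_iff, Set.mem_singleton_iff] at hx
  rcases hx with rfl | rfl | rfl
  · rw [s_apply]; split_ifs <;> omega
  · rw [sinv_apply]; split_ifs <;> omega
  · rw [σ_apply]; split_ifs <;> omega

lemma natAbs_prod (l : List (Equiv.Perm ℤ)) (hl : ∀ x ∈ l, x ∈ S) (n : ℤ) :
    (l.prod n).natAbs ≤ n.natAbs + l.length := by
  induction l with
  | nil => simp
  | cons x l ih =>
    have h1 := natAbs_gen x (hl x (by simp)) (l.prod n)
    have h2 := ih (fun y hy => hl y (by simp [hy]))
    simp only [List.prod_cons, Equiv.Perm.mul_apply, List.length_cons]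
    omega

lemma hasWord_zpow (t : ℤ) : HasWord (s ^ t) t.natAbs := by
  rcases Int.natAbs_eq t with e | e
  · rw [e, zpow_natCast, Int.natAbs_natCast]; exact hasWord_spow _
  · rw [e, zpow_neg, zpow_natCast, Int.natAbs_neg, Int.natAbs_natCast, ← inv_pow]
    exact hasWord_sinvpow _

lemma natAbs_zpow (t n : ℤ) : ((s ^ t) n).natAbs ≤ n.natAbs + t.natAbs := by
  obtain ⟨l, h1, h2, h3⟩ := hasWord_zpow t
  have := natAbs_prod l h1 n
  rwa [h2, h3] at this

lemma conj_short (k m : ℕ) (l : List (Equiv.Perm ℤ)) :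
    (∀ x ∈ l, x ∈ S) → l.length < m →
    ∃ t : ℤ, t.natAbs ≤ l.length ∧ l.prod⁻¹ * h k m * l.prod = (s ^ t)⁻¹ * h k m * s ^ t := by
  induction l using List.reverseRecOn with
  | nil => intro _ _; exact ⟨0, by simp, by simp⟩
  | append_singleton l x ih =>
    intro hl hm
    simp only [List.length_append, List.length_singleton] at hm ⊢
    obtain ⟨t, ht, e⟩ := ih (fun y hy => hl y (by simp [hy])) (by omega)
    have hx := hl x (by simp)
    have e' : (l ++ [x]).prod⁻¹ * h k m * (l ++ [x]).prod
        = x⁻¹ * ((s ^ t)⁻¹ * h k m * s ^ t) * x := by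
      rw [← e, List.prod_append, List.prod_singleton]; group
    rw [e']
    simp only [S, Set.mem_insert_iff, Set.mem_singleton_iff] at hx
    rcases hx with rfl | rfl | rfl
    · exact ⟨t + 1, by omega, by rw [zpow_add_one]; group⟩
    · exact ⟨t - 1, by omega, by rw [zpow_sub_one]; group⟩
    · refine ⟨t, by omega, ?_⟩
      have f1 := natAbs_zpow t 1
      have f2 := natAbs_zpow t (-1)
      simp only [Int.natAbs_neg, Int.natAbs_one] at f1 f2
      have c1 : h k m ((s ^ t) 1) = (s ^ t) 1 := by
        rw [h_apply, if_neg (by omega)]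
      have c2 : h k m ((s ^ t) (-1)) = (s ^ t) (-1) := by
        rw [h_apply, if_neg (by omega)]
      have d0 : (s ^ t)⁻¹ * h k m * s ^ t * σ = σ * ((s ^ t)⁻¹ * h k m * s ^ t) := by
        unfold σ
        rw [Equiv.mul_swap_eq_swap_mul]
        simp [Equiv.Perm.mul_apply, c1, c2]
      rw [mul_assoc, d0, inv_mul_cancel_left]

/-! ### Lower bound -/

def lam (n : ℤ) : ℤ := if n < 0 then n else n - 1
def mu (n : ℤ) : ℤ := if n < 0 then n + 1 else n - 1

noncomputable def Psi (K : ℤ) (w : Equiv.Perm ℤ) : ℤ :=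
  ∑ i ∈ Finset.Icc 1 K, (mu (w⁻¹ (-i)) - mu (w⁻¹ i))

def Icount (E : Finset (ℤ × ℤ)) (w : Equiv.Perm ℤ) : ℤ :=
  ((E.filter (fun p => w⁻¹ p.2 < w⁻¹ p.1)).card : ℤ)

/-- Invariant at level `q`; `t` is the cursor position. -/
def Inv (w : Equiv.Perm ℤ) (t q : ℤ) : Prop :=
  (-q < t ∧ t < q ∧ ∀ b : ℤ, (b < -q ∨ q < b) → lam (w⁻¹ b) + t = lam b) ∨
  (∃ x : ℤ, -q ≤ x ∧ x ≤ -1 ∧ q - 1 ≤ lam (w⁻¹ x) + t ∧ (t < q → q ≤ lam (w⁻¹ x) + t)) ∨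
  (∃ y : ℤ, 1 ≤ y ∧ y ≤ q ∧ lam (w⁻¹ y) + t ≤ -q ∧ (-q < t → lam (w⁻¹ y) + t ≤ -q - 1))

lemma inv_ne_zero {w : Equiv.Perm ℤ} (h0 : w 0 = 0) {b : ℤ} (hb : b ≠ 0) : w⁻¹ b ≠ 0 := by
  intro e
  apply hb
  rw [← h0, ← e]; simp

lemma ne_zero_of {w : Equiv.Perm ℤ} (h0 : w 0 = 0) {b : ℤ} (hb : b ≠ 0) : w b ≠ 0 := by
  intro e
  exact hb (w.injective (e.trans h0.symm))

lemma inv_eq_of {w : Equiv.Perm ℤ} {b n : ℤ} (e : w⁻¹ b = n) : w n = b := by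
  rw [← e]; simp

lemma lam_sinv {n : ℤ} (hn : n ≠ 0) : lam (s⁻¹ n) = lam n - 1 := by
  rw [sinv_apply]; unfold lam; split_ifs <;> omega
lemma lam_s {n : ℤ} (hn : n ≠ 0) : lam (s n) = lam n + 1 := by
  rw [s_apply]; unfold lam; split_ifs <;> omega

lemma lam_eq_zero {n : ℤ} (hn : n ≠ 0) (e : lam n = 0) : n = 1 := by
  unfold lam at e; split_ifs at e <;> omega
lemma lam_eq_neg {n : ℤ} (hn : n ≠ 0) (e : lam n = -1) : n = -1 := by
  unfold lam at e; split_ifs at e <;> omega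

lemma Inv_s {w : Equiv.Perm ℤ} (h0 : w 0 = 0) {t q : ℤ} (hq : 1 ≤ q) (hI : Inv w t q)
    (hb : w 1 < 0 ∨ (t ≠ q - 1 ∧ t ≠ -q)) : Inv (w * s) (t + 1) q := by
  have key : ∀ b : ℤ, b ≠ 0 → lam ((w * s)⁻¹ b) + (t + 1) = lam (w⁻¹ b) + t := by
    intro b hb
    rw [mul_inv_rev, Equiv.Perm.mul_apply, lam_sinv (inv_ne_zero h0 hb)]; ring
  rcases hI with ⟨a1, a2, a3⟩ | ⟨x, x1, x2, x3, x4⟩ | ⟨y, y1, y2, y3, y4⟩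
  · by_cases ht : t + 1 < q
    · exact Or.inl ⟨by omega, ht, fun b hb => by rw [key b (by omega)]; exact a3 b hb⟩
    · have hw : w 1 < 0 := by rcases hb with hb | hb <;> omega
      have hl : lam (w⁻¹ (w 1)) = 0 := by simp [lam]
      right; left
      refine ⟨w 1, ?_, by omega, ?_, ?_⟩
      · by_contra hc
        have := a3 (w 1) (by omega)
        rw [hl] at this
        unfold lam at this; split_ifs at this; omega
      · rw [key _ (by omega), hl]; omega
      · intro; omega
  · right; left
    refine ⟨x, x1, x2, ?_, ?_⟩
    · rw [key _ (by omega)]; exact x3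
    · intro ht; rw [key _ (by omega)]; exact x4 (by omega)
  · right; right
    refine ⟨y, y1, y2, ?_, ?_⟩
    · rw [key _ (by omega)]; exact y3
    · intro ht; rw [key _ (by omega)]
      by_cases ht' : -q < t
      · exact y4 ht'
      · by_contra hc
        have e0 : lam (w⁻¹ y) = 0 := by omega
        have := inv_eq_of (lam_eq_zero (inv_ne_zero h0 (by omega)) e0)
        rcases hb with hb | hb <;> omega

lemma Inv_sinv {w : Equiv.Perm ℤ} (h0 : w 0 = 0) {t q : ℤ} (hq : 1 ≤ q) (hI : Inv w t q)
    (hb : 0 < w (-1) ∨ (t - 1 ≠ q - 1 ∧ t - 1 ≠ -q)) : Inv (w * s⁻¹) (t - 1) q := by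
  have key : ∀ b : ℤ, b ≠ 0 → lam ((w * s⁻¹)⁻¹ b) + (t - 1) = lam (w⁻¹ b) + t := by
    intro b hb
    rw [mul_inv_rev, inv_inv, Equiv.Perm.mul_apply, lam_s (inv_ne_zero h0 hb)]; ring
  rcases hI with ⟨a1, a2, a3⟩ | ⟨x, x1, x2, x3, x4⟩ | ⟨y, y1, y2, y3, y4⟩
  · by_cases ht : -q < t - 1
    · exact Or.inl ⟨by omega, by omega, fun b hb => by rw [key b (by omega)]; exact a3 b hb⟩
    · have hw : 0 < w (-1) := by rcases hb with hb | hb <;> omega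
      have hl : lam (w⁻¹ (w (-1))) = -1 := by simp [lam]
      right; right
      refine ⟨w (-1), by omega, ?_, ?_, ?_⟩
      · by_contra hc
        have := a3 (w (-1)) (by omega)
        rw [hl] at this
        unfold lam at this; split_ifs at this <;> omega
      · rw [key _ (by omega), hl]; omega
      · intro; omega
  · right; left
    refine ⟨x, x1, x2, ?_, ?_⟩
    · rw [key _ (by omega)]; exact x3
    · intro ht; rw [key _ (by omega)]
      by_cases ht' : t < q
      · exact x4 ht'
      · by_contra hc
        have e0 : lam (w⁻¹ x) = -1 := by omega
        have := inv_eq_of (lam_eq_neg (inv_ne_zero h0 (by omega)) e0)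
        rcases hb with hb | hb <;> omega
  · right; right
    refine ⟨y, y1, y2, ?_, ?_⟩
    · rw [key _ (by omega)]; exact y3
    · intro ht; rw [key _ (by omega)]; exact y4 (by omega)

lemma Inv_σ {w : Equiv.Perm ℤ} (h0 : w 0 = 0) {t q : ℤ} (hq : 1 ≤ q) (hI : Inv w t q) :
    Inv (w * σ) t q := by
  have key : ∀ b : ℤ, b ≠ 0 → (lam ((w * σ)⁻¹ b) = lam (w⁻¹ b)) ∨
      (lam (w⁻¹ b) = 0 ∧ lam ((w * σ)⁻¹ b) = -1) ∨
      (lam (w⁻¹ b) = -1 ∧ lam ((w * σ)⁻¹ b) = 0) := by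
    intro b hb
    rw [mul_inv_rev, Equiv.Perm.mul_apply, σ_inv, σ_apply]
    have := inv_ne_zero h0 hb
    unfold lam
    split_ifs <;> omega
  rcases hI with ⟨a1, a2, a3⟩ | ⟨x, x1, x2, x3, x4⟩ | ⟨y, y1, y2, y3, y4⟩
  · refine Or.inl ⟨a1, a2, fun b hb => ?_⟩
    have h1 := a3 b hb
    have h2 : lam b ≤ -q - 1 ∨ q ≤ lam b := by unfold lam; split_ifs <;> omega
    rcases key b (by omega) with e | ⟨e, e'⟩ | ⟨e, e'⟩ <;> omega
  · right; left
    refine ⟨x, x1, x2, ?_, ?_⟩ <;>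
    rcases key x (by omega) with e | ⟨e, e'⟩ | ⟨e, e'⟩ <;> omega
  · right; right
    refine ⟨y, y1, y2, ?_, ?_⟩ <;>
    rcases key y (by omega) with e | ⟨e, e'⟩ | ⟨e, e'⟩ <;> omega

lemma mu_sinv {n : ℤ} (hn : n ≠ 0) : mu (s⁻¹ n) = mu n - 1 + if n = 1 then 1 else 0 := by
  rw [sinv_apply]; unfold mu; split_ifs <;> omega
lemma mu_s {n : ℤ} (hn : n ≠ 0) : mu (s n) = mu n + 1 - if n = -1 then 1 else 0 := by
  rw [s_apply]; unfold mu; split_ifs <;> omega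

lemma Psi_s {w : Equiv.Perm ℤ} (h0 : w 0 = 0) (K : ℤ) (hK : (w 1).natAbs ≤ K) :
    Psi K (w * s) = Psi K w + if w 1 < 0 then 1 else -1 := by
  have hne : w 1 ≠ 0 := ne_zero_of h0 (by norm_num)
  have : Psi K (w * s) - Psi K w =
      ∑ i ∈ Finset.Icc 1 K, ((if -w 1 = i then (1 : ℤ) else 0) - (if w 1 = i then 1 else 0)) := by
    unfold Psi
    rw [← Finset.sum_sub_distrib]
    refine Finset.sum_congr rfl fun i hi => ?_
    rw [Finset.mem_Icc] at hi
    simp only [mul_inv_rev, Equiv.Perm.mul_apply]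
    rw [mu_sinv (inv_ne_zero h0 (by omega)), mu_sinv (inv_ne_zero h0 (by omega))]
    have e1 : (w⁻¹ (-i) = 1) ↔ (-w 1 = i) := by
      rw [Equiv.Perm.inv_eq_iff_eq]; omega
    have e2 : (w⁻¹ i = 1) ↔ (w 1 = i) := by
      rw [Equiv.Perm.inv_eq_iff_eq]; omega
    simp only [e1, e2]
    ring
  rw [Finset.sum_sub_distrib, Finset.sum_ite_eq, Finset.sum_ite_eq] at this
  simp only [Finset.mem_Icc] at this
  split_ifs at this ⊢ <;> omega

lemma Psi_sinv {w : Equiv.Perm ℤ} (h0 : w 0 = 0) (K : ℤ) (hK : (w (-1)).natAbs ≤ K) :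
    Psi K (w * s⁻¹) = Psi K w + if 0 < w (-1) then 1 else -1 := by
  have hne : w (-1) ≠ 0 := ne_zero_of h0 (by norm_num)
  have : Psi K (w * s⁻¹) - Psi K w =
      ∑ i ∈ Finset.Icc 1 K,
        ((if w (-1) = i then (1 : ℤ) else 0) - (if -w (-1) = i then 1 else 0)) := by
    unfold Psi
    rw [← Finset.sum_sub_distrib]
    refine Finset.sum_congr rfl fun i hi => ?_
    rw [Finset.mem_Icc] at hi
    simp only [mul_inv_rev, inv_inv, Equiv.Perm.mul_apply]
    rw [mu_s (inv_ne_zero h0 (by omega)), mu_s (inv_ne_zero h0 (by omega))]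
    have e1 : (w⁻¹ (-i) = -1) ↔ (-w (-1) = i) := by
      rw [Equiv.Perm.inv_eq_iff_eq]; omega
    have e2 : (w⁻¹ i = -1) ↔ (w (-1) = i) := by
      rw [Equiv.Perm.inv_eq_iff_eq]; omega
    simp only [e1, e2]
    ring
  rw [Finset.sum_sub_distrib, Finset.sum_ite_eq, Finset.sum_ite_eq] at this
  simp only [Finset.mem_Icc] at this
  split_ifs at this ⊢ <;> omega

lemma Psi_σ (w : Equiv.Perm ℤ) (K : ℤ) : Psi K (w * σ) = Psi K w := by
  have : ∀ n, mu (σ n) = mu n := by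
    intro n; rw [σ_apply]; unfold mu; split_ifs <;> omega
  unfold Psi
  simp only [mul_inv_rev, Equiv.Perm.mul_apply, σ_inv, this]

lemma s_mono {a b : ℤ} (ha : a ≠ 0) (hb : b ≠ 0) : s a < s b ↔ a < b := by
  simp only [s_apply]; split_ifs <;> omega
lemma sinv_mono {a b : ℤ} (ha : a ≠ 0) (hb : b ≠ 0) : s⁻¹ a < s⁻¹ b ↔ a < b := by
  simp only [sinv_apply]; split_ifs <;> omega

lemma Icount_s {w : Equiv.Perm ℤ} (h0 : w 0 = 0) (E : Finset (ℤ × ℤ))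
    (hE : ∀ p ∈ E, p.1 ≠ 0 ∧ p.2 ≠ 0) : Icount E (w * s) = Icount E w := by
  unfold Icount
  congr 2
  refine Finset.filter_congr fun p hp => ?_
  rw [mul_inv_rev, Equiv.Perm.mul_apply, Equiv.Perm.mul_apply,
    sinv_mono (inv_ne_zero h0 (hE p hp).2) (inv_ne_zero h0 (hE p hp).1)]

lemma Icount_sinv {w : Equiv.Perm ℤ} (h0 : w 0 = 0) (E : Finset (ℤ × ℤ))
    (hE : ∀ p ∈ E, p.1 ≠ 0 ∧ p.2 ≠ 0) : Icount E (w * s⁻¹) = Icount E w := by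
  unfold Icount
  congr 2
  refine Finset.filter_congr fun p hp => ?_
  rw [mul_inv_rev, inv_inv, Equiv.Perm.mul_apply, Equiv.Perm.mul_apply,
    s_mono (inv_ne_zero h0 (hE p hp).2) (inv_ne_zero h0 (hE p hp).1)]

lemma Icount_σ {w : Equiv.Perm ℤ} (h0 : w 0 = 0) (E : Finset (ℤ × ℤ))
    (hE : ∀ p ∈ E, p.1 ≠ 0 ∧ p.2 ≠ 0) : Icount E (w * σ) ≤ Icount E w + 1 := by
  unfold Icount
  have : E.filter (fun p => (w * σ)⁻¹ p.2 < (w * σ)⁻¹ p.1) ⊆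
      insert (w (-1), w 1) (E.filter (fun p => w⁻¹ p.2 < w⁻¹ p.1)) := by
    rintro ⟨a, b⟩ hp
    rw [Finset.mem_filter] at hp
    obtain ⟨hp1, hp2⟩ := hp
    have ha := inv_ne_zero h0 (hE _ hp1).1
    have hb := inv_ne_zero h0 (hE _ hp1).2
    rw [Finset.mem_insert, Finset.mem_filter]
    by_cases hc : w⁻¹ b < w⁻¹ a
    · exact Or.inr ⟨hp1, hc⟩
    · left
      simp only [mul_inv_rev, Equiv.Perm.mul_apply, σ_inv, σ_apply] at hp2 ha hb
      have e : w⁻¹ a = -1 ∧ w⁻¹ b = 1 := by split_ifs at hp2 <;> omega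
      rw [inv_eq_of e.1, inv_eq_of e.2]
  have h1 := (Finset.card_le_card this).trans (Finset.card_insert_le _ _)
  exact_mod_cast h1

lemma main_invariant (E : Finset (ℤ × ℤ)) (hE : ∀ p ∈ E, p.1 ≠ 0 ∧ p.2 ≠ 0)
    (hE' : ∀ p ∈ E, p.1 < p.2) (K : ℤ)
    (l : List (Equiv.Perm ℤ)) : (∀ x ∈ l, x ∈ S) → (l.length : ℤ) + 1 ≤ K →
    l.prod 0 = 0 ∧ ∃ (t : ℤ) (B : Finset ℤ),
      Icount E l.prod + (Psi K l.prod - Psi K 1) + 2 * B.card ≤ l.length ∧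
      (∃ M : ℤ, ∀ n, M < n → l.prod n = n + t) ∧ t.natAbs ≤ l.length ∧
      ∀ q, 1 ≤ q → q ∉ B → Inv l.prod t q := by
  induction l using List.reverseRecOn with
  | nil =>
    intro _ _
    refine ⟨rfl, 0, ∅, ?_, ⟨0, by simp⟩, by simp, ?_⟩
    · have : Icount E 1 = 0 := by
        unfold Icount
        rw [Finset.filter_false_of_mem]
        · simp
        · intro p hp; simpa using (hE' p hp).le
      simp [this]
    · intro q hq _
      exact Or.inl ⟨by omega, by omega, by simp⟩
  | append_singleton l x ih =>
    intro hl hK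
    simp only [List.length_append, List.length_singleton] at hK ⊢
    push_cast at hK ⊢
    have hl' : ∀ y ∈ l, y ∈ S := fun y hy => hl y (by simp [hy])
    obtain ⟨h0, t, B, h1, ⟨M, hM⟩, h3, h4⟩ := ih hl' (by omega)
    have hx := hl x (by simp)
    have b1 := natAbs_prod l hl' 1
    have b2 := natAbs_prod l hl' (-1)
    simp only [Int.natAbs_neg, Int.natAbs_one] at b1 b2
    rw [List.prod_append, List.prod_singleton]
    generalize l.prod = w at *
    simp only [S, Set.mem_insert_iff, Set.mem_singleton_iff] at hx
    rcases hx with rfl | rfl | rfl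
    · refine ⟨by rw [Equiv.Perm.mul_apply, s_apply]; simpa using h0, t + 1, ?_⟩
      have hlim : ∃ M : ℤ, ∀ n, M < n → (w * s) n = n + (t + 1) := by
        refine ⟨max M 1, fun n hn => ?_⟩
        have : s n = n + 1 := by rw [s_apply]; split_ifs <;> omega
        rw [Equiv.Perm.mul_apply, this, hM _ (by omega)]; ring
      have hP := Psi_s h0 K (by omega)
      rw [Icount_s h0 E hE, hP]
      by_cases hw : w 1 < 0
      · refine ⟨B, ?_, hlim, by omega, fun q hq hqB => Inv_s h0 hq (h4 q hq hqB) (Or.inl hw)⟩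
        rw [if_pos hw]; omega
      · refine ⟨insert (if 0 ≤ t then t + 1 else -t) B, ?_, hlim, by omega, ?_⟩
        · rw [if_neg hw]
          have := Finset.card_insert_le (if 0 ≤ t then t + 1 else -t) B
          omega
        · intro q hq hqB
          rw [Finset.mem_insert, not_or] at hqB
          refine Inv_s h0 hq (h4 q hq hqB.2) (Or.inr ?_)
          have := hqB.1
          split_ifs at this <;> omega
    · refine ⟨by rw [Equiv.Perm.mul_apply, sinv_apply]; simpa using h0, t - 1, ?_⟩
      have hlim : ∃ M : ℤ, ∀ n, M < n → (w * s⁻¹) n = n + (t - 1) := by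
        refine ⟨max (M + 1) 1, fun n hn => ?_⟩
        have : s⁻¹ n = n - 1 := by rw [sinv_apply]; split_ifs <;> omega
        rw [Equiv.Perm.mul_apply, this, hM _ (by omega)]; ring
      have hP := Psi_sinv h0 K (by omega)
      rw [Icount_sinv h0 E hE, hP]
      by_cases hw : 0 < w (-1)
      · refine ⟨B, ?_, hlim, by omega, fun q hq hqB => Inv_sinv h0 hq (h4 q hq hqB) (Or.inl hw)⟩
        rw [if_pos hw]; omega
      · refine ⟨insert (if 0 ≤ t - 1 then t else -(t - 1)) B, ?_, hlim, by omega, ?_⟩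
        · rw [if_neg hw]
          have := Finset.card_insert_le (if 0 ≤ t - 1 then t else -(t - 1)) B
          omega
        · intro q hq hqB
          rw [Finset.mem_insert, not_or] at hqB
          refine Inv_sinv h0 hq (h4 q hq hqB.2) (Or.inr ?_)
          have := hqB.1
          split_ifs at this <;> omega
    · refine ⟨by rw [Equiv.Perm.mul_apply, σ_apply]; simpa using h0, t, B, ?_, ?_, by omega,
        fun q hq hqB => Inv_σ h0 hq (h4 q hq hqB)⟩
      · rw [Psi_σ]
        have := Icount_σ h0 E hE
        omega
      · refine ⟨max M 1, fun n hn => ?_⟩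
        have : σ n = n := by rw [σ_apply]; split_ifs <;> omega
        rw [Equiv.Perm.mul_apply, this, hM _ (by omega)]

lemma not_Inv_h (k m : ℕ) (hm : 1 ≤ m) (hmk : m ≤ k) (q : ℤ) (hq : 1 ≤ q) (hqk : q < k) :
    ¬ Inv (h k m) 0 q := by
  rintro (⟨a1, a2, a3⟩ | ⟨x, x1, x2, x3, x4⟩ | ⟨y, y1, y2, y3, y4⟩)
  · have := a3 k (by omega)
    rw [h_inv, h_apply, if_pos (by omega)] at this
    unfold lam at this; split_ifs at this <;> omega
  · have := x4 (by omega)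
    rw [h_inv, h_apply] at this
    unfold lam at this; split_ifs at this <;> omega
  · have := y4 (by omega)
    rw [h_inv, h_apply] at this
    unfold lam at this; split_ifs at this <;> omega

noncomputable def Epart (l : ℤ) : Finset (ℤ × ℤ) :=
  ({-l} ×ˢ (Finset.Icc (-l + 1) l).erase 0) ∪ (((Finset.Icc (-l + 1) (l - 1)).erase 0) ×ˢ {l})

lemma mem_Epart (l : ℤ) (p : ℤ × ℤ) : p ∈ Epart l ↔
    (p.1 = -l ∧ p.2 ≠ 0 ∧ -l + 1 ≤ p.2 ∧ p.2 ≤ l) ∨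
    (p.2 = l ∧ p.1 ≠ 0 ∧ -l + 1 ≤ p.1 ∧ p.1 ≤ l - 1) := by
  simp only [Epart, Finset.mem_union, Finset.mem_product, Finset.mem_singleton, Finset.mem_erase,
    Finset.mem_Icc]
  tauto

lemma card_Epart (l : ℕ) : (Epart ((l : ℤ) + 1)).card = 4 * l + 1 := by
  unfold Epart
  rw [Finset.card_union_of_disjoint, Finset.card_product, Finset.card_product,
    Finset.card_singleton, Finset.card_singleton, Finset.card_erase_of_mem, Int.card_Icc]
  · rcases Nat.eq_zero_or_pos l with rfl | hl
    · simp
    · rw [Finset.card_erase_of_mem (by rw [Finset.mem_Icc]; omega), Int.card_Icc]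
      omega
  · rw [Finset.mem_Icc]; omega
  · rw [Finset.disjoint_left]
    rintro ⟨a, b⟩ h1 h2
    simp only [Finset.mem_product, Finset.mem_singleton, Finset.mem_erase, Finset.mem_Icc] at h1 h2
    omega

lemma lower_bound (m d n : ℕ) (hw : HasWord (h (m + d + 1) (m + 1)) n) :
    base m d + 2 * (m + d) ≤ n := by
  obtain ⟨l, hl, hp, hn⟩ := hw
  set E : Finset (ℤ × ℤ) :=
    (Finset.range (d + 1)).biUnion (fun i => Epart (((m + i : ℕ) : ℤ) + 1)) with hEdef
  have memE : ∀ p ∈ E, ∃ i : ℕ, i ≤ d ∧ p ∈ Epart (((m + i : ℕ) : ℤ) + 1) := by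
    intro p hp
    rw [hEdef, Finset.mem_biUnion] at hp
    obtain ⟨i, hi, hp⟩ := hp
    rw [Finset.mem_range] at hi
    exact ⟨i, by omega, hp⟩
  have hE : ∀ p ∈ E, p.1 ≠ 0 ∧ p.2 ≠ 0 := by
    intro p hp
    obtain ⟨i, hi, hp⟩ := memE p hp
    rw [mem_Epart] at hp; omega
  have hE' : ∀ p ∈ E, p.1 < p.2 := by
    intro p hp
    obtain ⟨i, hi, hp⟩ := memE p hp
    rw [mem_Epart] at hp; omega
  have cardE : E.card = ∑ i ∈ Finset.range (d + 1), (4 * (m + i) + 1) := by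
    rw [hEdef, Finset.card_biUnion]
    · exact Finset.sum_congr rfl fun i _ => card_Epart (m + i)
    · intro i _ j _ hij
      rw [Function.onFun, Finset.disjoint_left]
      intro p h1 h2
      rw [mem_Epart] at h1 h2
      omega
  set K : ℤ := ((n + m + d + 2 : ℕ) : ℤ) with hK
  obtain ⟨-, t, B, c1, ⟨M, hM⟩, -, c4⟩ := main_invariant E hE hE' K l hl (by omega)
  rw [hp, hn] at c1
  rw [hp] at hM c4
  have ht : t = 0 := by
    have := hM (max (M + 1) (m + d + 2)) (by omega)
    rw [h_apply, if_neg (by omega)] at this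
    omega
  subst ht
  have hB : Finset.Icc (1 : ℤ) (m + d) ⊆ B := by
    intro q hq
    rw [Finset.mem_Icc] at hq
    by_contra hc
    exact not_Inv_h (m + d + 1) (m + 1) (by omega) (by omega) q hq.1 (by push_cast; omega)
      (c4 q hq.1 hc)
  have hBc := Finset.card_le_card hB
  rw [Int.card_Icc] at hBc
  have hI : Icount E (h (m + d + 1) (m + 1)) = E.card := by
    unfold Icount
    rw [Finset.filter_true_of_mem]
    intro p hp
    obtain ⟨i, hi, hp⟩ := memE p hp
    rw [mem_Epart] at hp
    rw [h_inv, h_apply, h_apply]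
    split_ifs <;> omega
  have hPsi : Psi K (h (m + d + 1) (m + 1)) - Psi K 1
      = ∑ i ∈ Finset.range (d + 1), (4 * ((m : ℤ) + i)) := by
    unfold Psi
    rw [← Finset.sum_sub_distrib]
    have e1 : ∑ i ∈ Finset.range (d + 1), (4 * ((m : ℤ) + i))
        = ∑ j ∈ Finset.Icc ((m : ℤ) + 1) (m + d + 1), 4 * (j - 1) := by
      refine Finset.sum_bij (fun i _ => (m : ℤ) + i + 1) ?_ ?_ ?_ ?_
      · intro i hi; rw [Finset.mem_range] at hi; rw [Finset.mem_Icc]; omega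
      · intro i _ j _ hij; omega
      · intro j hj; rw [Finset.mem_Icc] at hj
        exact ⟨(j - m - 1).toNat, by rw [Finset.mem_range]; omega, by omega⟩
      · intro i _; ring
    rw [e1]
    symm
    have hsub : Finset.Icc ((m : ℤ) + 1) (m + d + 1) ⊆ Finset.Icc 1 K := by
      intro j hj; rw [Finset.mem_Icc] at hj ⊢; omega
    rw [← Finset.sum_subset_zero_on_sdiff hsub (f := fun j => 4 * (j - 1))]
    · intro j hj
      rw [Finset.mem_sdiff, Finset.mem_Icc, Finset.mem_Icc] at hj
      rw [h_inv, h_apply, h_apply, if_neg (by omega), if_neg (by omega)]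
      simp
    · intro j hj
      rw [Finset.mem_Icc] at hj
      rw [h_inv, h_apply, h_apply, if_pos (by omega), if_pos (by omega)]
      simp only [inv_one, Equiv.Perm.one_apply]
      unfold mu
      split_ifs <;> omega
  rw [hI, hPsi, cardE] at c1
  have hbase : ((base m d : ℕ) : ℤ) = ((∑ i ∈ Finset.range (d + 1), (4 * (m + i) + 1) : ℕ) : ℤ)
      + ∑ i ∈ Finset.range (d + 1), (4 * ((m : ℤ) + i)) := by
    unfold base
    push_cast
    rw [← Finset.sum_add_distrib]
    exact Finset.sum_congr rfl fun i _ => by ring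
  omega

/-! ### Spheres -/

lemma sphere_hasWord {r : ℕ} (hr : 1 ≤ r) {w : Equiv.Perm ℤ} (hw : w ∈ MedScale.sphere S r) :
    HasWord w r := by
  have hw' : MedScale.wlen S w = r := hw
  rcases Set.eq_empty_or_nonempty
    {n : ℕ | ∃ l : List (Equiv.Perm ℤ), (∀ x ∈ l, x ∈ S) ∧ l.prod = w ∧ l.length = n} with e | ⟨n, hn⟩
  · unfold MedScale.wlen at hw'
    rw [e, Nat.sInf_empty] at hw'
    omega
  · have := HasWord.wlen (g := w) (n := n) hn
    rwa [hw'] at this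

lemma sphere_finite {r : ℕ} (hr : 1 ≤ r) : (MedScale.sphere S r).Finite := by
  have hS : S.Finite := by unfold S; exact Set.toFinite _
  have : Finite S := hS
  have hL : Set.Finite {l : List S | l.length = r} := List.finite_length_eq S r
  refine (hL.image (fun l => (l.map Subtype.val).prod)).subset ?_
  intro w hw
  obtain ⟨l, h1, h2, h3⟩ := sphere_hasWord hr hw
  refine ⟨l.attach.map (fun x => ⟨x.1, h1 x.1 x.2⟩), by simp [h3], ?_⟩
  simp [List.map_map, Function.comp_def, h2]

lemma spow_length (r : ℕ) (l : List (Equiv.Perm ℤ)) (hl : ∀ x ∈ l, x ∈ S)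
    (hp : l.prod = s ^ r) : r ≤ l.length := by
  have := natAbs_prod l hl 1
  rw [hp, spow_pos r 1 le_rfl] at this
  simp only [Int.natAbs_one] at this
  omega

lemma spow_mem_sphere (r : ℕ) : s ^ r ∈ MedScale.sphere S r := by
  show MedScale.wlen S (s ^ r) = r
  apply le_antisymm (hasWord_spow r).wlen_le
  obtain ⟨l, h1, h2, h3⟩ := (hasWord_spow r).wlen
  rw [← h3]
  exact spow_length r l h1 h2

end Houghton

open Houghton in
/-- For `1 < m ≤ k` and `1 ≤ r < m`, the element `h_{k,m}` of
Houghton's group `H₂` has positive spherical comparison curvature at radius `r`. -/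
theorem houghton_pos_sphereCurv (k m r : ℕ) (h1 : 1 < m) (h2 : m ≤ k)
    (hr : 1 ≤ r) (hrm : r < m) :
    0 < MedScale.sphereCurv S r (h k m) := by
  obtain ⟨m, rfl⟩ : ∃ m', m = m' + 1 := ⟨m - 1, by omega⟩
  obtain ⟨d, rfl⟩ : ∃ d, k = m + d + 1 := ⟨k - m - 1, by omega⟩
  have hword : HasWord (h (m + d + 1) (m + 1)) (base m d + 2 * (m + d)) := by
    simpa using hasWord_zconj m d 0 (by simp)
  have hlow := lower_bound m d _ hword.wlen
  set n := MedScale.wlen S (h (m + d + 1) (m + 1)) with hn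
  have hle : ∀ w ∈ MedScale.sphere S r,
      MedScale.wlen S (w⁻¹ * h (m + d + 1) (m + 1) * w) ≤ n := by
    intro w hw
    obtain ⟨l, l1, l2, l3⟩ := sphere_hasWord hr hw
    obtain ⟨t, ht, e⟩ := conj_short (m + d + 1) (m + 1) l l1 (by omega)
    rw [← l2, e]
    have := (hasWord_zconj m d t (by omega)).wlen_le
    omega
  have hlt : MedScale.wlen S ((s ^ r)⁻¹ * h (m + d + 1) (m + 1) * s ^ r) < n := by
    have := (hasWord_conj_neg m d r (by omega)).wlen_le
    omega
  have hfin := sphere_finite hr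
  have hcard : Nat.card (MedScale.sphere S r) = hfin.toFinset.card :=
    Nat.card_eq_card_finite_toFinset hfin
  have hmem : s ^ r ∈ hfin.toFinset := by
    rw [Set.Finite.mem_toFinset]; exact spow_mem_sphere r
  have hcpos : 0 < (hfin.toFinset.card : ℝ) := by
    exact_mod_cast Finset.card_pos.2 ⟨_, hmem⟩
  have hsum : ∑ᶠ w ∈ MedScale.sphere S r,
      (MedScale.wlen S (w⁻¹ * h (m + d + 1) (m + 1) * w) : ℝ) < hfin.toFinset.card * (n : ℝ) := by
    rw [finsum_mem_eq_finite_toFinset_sum _ hfin, ← nsmul_eq_mul, ← Finset.sum_const]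
    refine Finset.sum_lt_sum (fun w hw => ?_) ⟨s ^ r, hmem, by exact_mod_cast hlt⟩
    exact_mod_cast hle w (by rwa [Set.Finite.mem_toFinset] at hw)
  have hnpos : 0 < (n : ℝ) := by
    have : 0 < n := by omega
    exact_mod_cast this
  unfold MedScale.sphereCurv MedScale.sphereDist
  rw [hcard, ← hn]
  refine div_pos ?_ hnpos
  rw [sub_pos, one_div, inv_mul_lt_iff₀ hcpos]
  exact hsum
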